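/- Let the attribute set be the disjoint union A = Ā ⊔ B̄ of two finite sets, and let M = {m} where L(m) = {(a,a) : a ∈ Ā} with every similarity relation being equality, and R(m) = {(b,b) : b ∈ B̄}. For κ : Ā → U say a tuple t matches κ if D t a = κ a for all a ∈ Ā; κ is a key value of D if some tuple matches it. For a key value κ and b ∈ B̄ let MF(κ,b) be the set of values that are most frequent in the multiset {D t b : t matches κ} (counted with multiplicity). Define R' := {(κ,f) : κ a key value of D, f : B̄ → U with f b ∈ MF(κ,b) for all b ∈ B̄}, and call S ⊆ R' a repair of R' if S contains exactly one pair (κ,f) for each key value κ of D. For an instance D' let tuples(D') := {(D' t restricted to Ā, D' t restricted to B̄) : t ∈ T}. Then {tuples(D') : D' is a minimally resolved instance of D with respect to M} equals the set of repairs of R'. -/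

import Mathlib

/-- A matching dependency: a finite set `L` of attribute pairs (the similarity
condition to the left of the arrow) and a finite set `R` of attribute pairs
(the pairs of attributes to be matched, to the right of the arrow). -/
structure MD (A : Type*) where
  L : Finset (A × A)
  R : Finset (A × A)

/-- `simPairs sim L D t₁ t₂` : the tuples `t₁, t₂` of instance `D` satisfy the
similarity condition given by the attribute pairs in `L`. -/
def simPairs {T A U : Type*} (sim : A → A → U → U → Prop)
    (L : Finset (A × A)) (D : T → A → U) (t₁ t₂ : T) : Prop :=
  ∀ p ∈ L, sim p.1 p.2 (D t₁ p.1) (D t₂ p.2)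

/-- `Modifiable sim M D t c` : the value of attribute `c` of tuple `t` is
modifiable in instance `D` with respect to the set `M` of MDs (least such predicate). -/
inductive Modifiable {T A U : Type*} (sim : A → A → U → U → Prop)
    (M : Finset (MD A)) (D : T → A → U) : T → A → Prop where
  | left_ne {m : MD A} {t s : T} {c e : A} :
      m ∈ M → (c, e) ∈ m.R → simPairs sim m.L D t s →
      D t c ≠ D s e → Modifiable sim M D t c
  | left_mod {m : MD A} {t s : T} {c e : A} :
      m ∈ M → (c, e) ∈ m.R → simPairs sim m.L D t s →
      Modifiable sim M D s e → Modifiable sim M D t c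
  | right_ne {m : MD A} {t s : T} {c e : A} :
      m ∈ M → (e, c) ∈ m.R → simPairs sim m.L D s t →
      D s e ≠ D t c → Modifiable sim M D t c
  | right_mod {m : MD A} {t s : T} {c e : A} :
      m ∈ M → (e, c) ∈ m.R → simPairs sim m.L D s t →
      Modifiable sim M D s e → Modifiable sim M D t c

/-- `(D, D') ⊨ M`. -/
def Sat {T A U : Type*} (sim : A → A → U → U → Prop)
    (M : Finset (MD A)) (D D' : T → A → U) : Prop :=
  (∀ m ∈ M, ∀ t₁ t₂ : T, simPairs sim m.L D t₁ t₂ →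
      ∀ p ∈ m.R, D' t₁ p.1 = D' t₂ p.2) ∧
  (∀ (t : T) (g : A), ¬ Modifiable sim M D t g → D' t g = D t g)

/-- `D'` is a resolved instance of `D` wrt `M`: there is a finite (possibly empty)
chain of instances `D₁, …, Dₙ` with `(D,D₁) ⊨ M`, `(Dᵢ,Dᵢ₊₁) ⊨ M`, `(Dₙ,D') ⊨ M`,
and `(D',D') ⊨ M`. -/
def ResolvedInstance {T A U : Type*} (sim : A → A → U → U → Prop)
    (M : Finset (MD A)) (D D' : T → A → U) : Prop :=
  ∃ L : List (T → A → U), List.Chain (Sat sim M) D (L ++ [D']) ∧ Sat sim M D' D'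

/-- Number of changed values in going from `D` to `D'`. -/
noncomputable def numChanges {T A U : Type*} (D D' : T → A → U) : ℕ :=
  Nat.card {p : T × A // D p.1 p.2 ≠ D' p.1 p.2}

/-- `D'` is a minimally resolved instance (MRI) of `D` wrt `M`. -/
def IsMRI {T A U : Type*} (sim : A → A → U → U → Prop)
    (M : Finset (MD A)) (D D' : T → A → U) : Prop :=
  ResolvedInstance sim M D D' ∧
  ∀ D'' : T → A → U, ResolvedInstance sim M D D'' →
    numChanges D D' ≤ numChanges D D''

/-- The edge relation of the similarity graph `G_D` on the vertex set `T × A`. -/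
def SimEdge {T A U : Type*} (sim : A → A → U → U → Prop)
    (M : Finset (MD A)) (D : T → A → U) (p q : T × A) : Prop :=
  ∃ m ∈ M, (simPairs sim m.L D p.1 q.1 ∧ (p.2, q.2) ∈ m.R) ∨
           (simPairs sim m.L D q.1 p.1 ∧ (q.2, p.2) ∈ m.R)

/-- `t` matches the key value `κ` in `D`. -/
def Matches {T AB BB U : Type*} (D : T → AB ⊕ BB → U) (κ : AB → U) (t : T) : Prop :=
  ∀ a : AB, D t (Sum.inl a) = κ a

/-- `v ∈ MF(κ, b)` : `v` is most frequent in the multiset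
`{D t b : t matches κ}`, counted with multiplicity. -/
def MostFreqB {T AB BB U : Type*} (D : T → AB ⊕ BB → U)
    (κ : AB → U) (b : BB) (v : U) : Prop :=
  (∃ t : T, Matches D κ t ∧ D t (Sum.inr b) = v) ∧
  ∀ w : U, Nat.card {t : T // Matches D κ t ∧ D t (Sum.inr b) = w} ≤
           Nat.card {t : T // Matches D κ t ∧ D t (Sum.inr b) = v}

/-- The transformed relation `R'` of the reduction. -/
def Rprime {T AB BB U : Type*} (D : T → AB ⊕ BB → U) :
    Set ((AB → U) × (BB → U)) :=
  { r | (∃ t : T, Matches D r.1 t) ∧ ∀ b : BB, MostFreqB D r.1 b (r.2 b) }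

/-- A repair of `R'`: a subset of `R'` containing exactly one pair `(κ, f)` for
each key value `κ` of `D`. -/
def IsRepair {T AB BB U : Type*} (D : T → AB ⊕ BB → U)
    (S : Set ((AB → U) × (BB → U))) : Prop :=
  S ⊆ Rprime D ∧
  ∀ κ : AB → U, (∃ t : T, Matches D κ t) → ∃! f : BB → U, (κ, f) ∈ S

/-- The set of (key part, non-key part) tuples of an instance. -/
def tuplesOf {T AB BB U : Type*} (D' : T → AB ⊕ BB → U) :
    Set ((AB → U) × (BB → U)) :=
  { r | ∃ t : T, r = (fun a => D' t (Sum.inl a), fun b => D' t (Sum.inr b)) }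

/-!
The value positions `(t, c)` split into the connected components of the similarity graph `G_D`, and
`(D, D') ⊨ M` says that `D'` is constant on each component and leaves alone the components on which
`D` is constant already. When no attribute is on the left of one matching dependency and on the
right of another, such a step leaves the similarity conditions untouched, so the chase is over after
one step. The number of changes is then a sum over the components, whose values can be chosen
independently: it is minimal iff every component receives one of its most frequent values.

For the key dependency, the positions `(t, a)` with `a ∈ Ā` are components by themselves, and the
other components are the sets `{(t, b) : t matches κ}` for a key value `κ` and some `b ∈ B̄`.
-/

section MostFrequent

variable {V W U : Type*}

/-- `u` is a most frequent value of `f` on `s`, that is, a most frequent element of the multiset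
`{f v : v ∈ s}`. Counts are `Set.ncard`, so this is meaningful for finite `s` only. -/
def IsMostFrequent (f : V → U) (s : Set V) (u : U) : Prop :=
  u ∈ f '' s ∧ ∀ w, (s ∩ f ⁻¹' {w}).ncard ≤ (s ∩ f ⁻¹' {u}).ncard

theorem isMostFrequent_image {g : W → V} (hg : g.Injective) (f : V → U) (s : Set W) (u : U) :
    IsMostFrequent f (g '' s) u ↔ IsMostFrequent (f ∘ g) s u := by
  have hcard (w : U) : (g '' s ∩ f ⁻¹' {w}).ncard = (s ∩ f ∘ g ⁻¹' {w}).ncard := by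
    rw [← Set.image_inter_preimage, Set.ncard_image_of_injective _ hg, Set.preimage_comp]
  simp only [IsMostFrequent, hcard, Set.image_image, Function.comp_apply]

theorem isMostFrequent_singleton (f : V → U) (v : V) (u : U) :
    IsMostFrequent f {v} u ↔ u = f v := by
  refine ⟨fun h => by simpa using h.1, ?_⟩
  rintro rfl
  refine ⟨by simp, fun w => Set.ncard_le_ncard (fun x hx => ?_)⟩
  simp [Set.mem_singleton_iff.1 hx.1]

theorem isMostFrequent_of_forall_mem {f : V → U} {s : Set V} {u : U} (hfin : s.Finite)
    (hs : s.Nonempty) (hu : ∀ v ∈ s, (s ∩ f ⁻¹' {f v}).ncard ≤ (s ∩ f ⁻¹' {u}).ncard) :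
    IsMostFrequent f s u := by
  constructor
  · obtain ⟨v, hv⟩ := hs
    have hpos : 0 < (s ∩ f ⁻¹' {f v}).ncard := (Set.ncard_pos (hfin.inter_of_left _)).2 ⟨v, hv, rfl⟩
    obtain ⟨x, hx, hxu⟩ := (Set.ncard_pos (hfin.inter_of_left _)).1 (hpos.trans_le (hu v hv))
    exact ⟨x, hx, hxu⟩
  · intro w
    rcases (s ∩ f ⁻¹' {w}).eq_empty_or_nonempty with hempty | ⟨v, hv, rfl⟩
    · simp [hempty]
    · exact hu v hv

theorem ncard_inter_preimage_le_iff {s : Set V} (hs : s.Finite) (f : V → U) (u w : U) :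
    (s ∩ f ⁻¹' {w}).ncard ≤ (s ∩ f ⁻¹' {u}).ncard ↔
      (s \ f ⁻¹' {u}).ncard ≤ (s \ f ⁻¹' {w}).ncard := by
  have hu := Set.ncard_inter_add_ncard_sdiff_eq_ncard s (f ⁻¹' {u}) hs
  have hw := Set.ncard_inter_add_ncard_sdiff_eq_ncard s (f ⁻¹' {w}) hs
  omega

end MostFrequent

section MergesClasses

variable {V U : Type*} {r : Setoid V} {f g : V → U}

theorem ncard_le_ncard_of_forall_class [Finite V] (r : Setoid V) {s t : Set V}
    (hst : ∀ v, ({w | r v w} ∩ s).ncard ≤ ({w | r v w} ∩ t).ncard) : s.ncard ≤ t.ncard := by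
  classical
  cases nonempty_fintype V
  have hsum (s : Set V) :
      s.ncard = ∑ q : Quotient r, (s ∩ Quotient.mk r ⁻¹' {q}).ncard := by
    simp only [Set.ncard_eq_toFinset_card']
    rw [Finset.card_eq_sum_card_fiberwise (f := Quotient.mk r) fun _ _ => Finset.mem_univ _]
    refine Finset.sum_congr rfl fun q _ => congrArg Finset.card ?_
    ext v
    simp
  have hclass (v : V) (s : Set V) : s ∩ Quotient.mk r ⁻¹' {Quotient.mk r v} = {w | r v w} ∩ s := by
    ext w
    simpa [and_comm] using fun _ => Quotient.eq.trans r.comm'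
  rw [hsum s, hsum t]
  refine Finset.sum_le_sum fun q _ => ?_
  induction q using Quotient.ind with
  | _ v => simpa only [hclass] using hst v

/-- `g` is constant on the classes of `r` and agrees with `f` on those classes on which `f` is
already constant. This is the shape of a chase step `(D, D') ⊨ M`; see `sat_iff_mergesClasses`. -/
structure MergesClasses (r : Setoid V) (f g : V → U) : Prop where
  eq_of_rel : ∀ ⦃v w⦄, r v w → g v = g w
  eq_of_forall_eq : ∀ v, (∀ w, r v w → f w = f v) → g v = f v

theorem mergesClasses_of_isMostFrequent (hg : ∀ ⦃v w⦄, r v w → g v = g w)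
    (hmf : ∀ v, IsMostFrequent f {w | r v w} (g v)) : MergesClasses r f g where
  eq_of_rel := hg
  eq_of_forall_eq v hv := by
    obtain ⟨w, hw, hgw⟩ := (hmf v).1
    exact hgw.symm.trans (hv w hw)

open Classical in
theorem MergesClasses.piecewise (hg : MergesClasses r f g) {v x : V} (hx : r v x) :
    MergesClasses r f ({w | r v w}.piecewise (fun _ => f x) g) where
  eq_of_rel a b hab := by
    have hiff : r v a ↔ r v b := ⟨fun h => r.trans h hab, fun h => r.trans h (r.symm hab)⟩
    simp [Set.piecewise, hiff, hg.eq_of_rel hab]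
  eq_of_forall_eq a ha := by
    by_cases hva : r v a
    · simpa [Set.piecewise, hva] using ha x (r.trans (r.symm hva) hx)
    · simpa [Set.piecewise, hva] using hg.eq_of_forall_eq a ha

theorem class_inter_ne (hg : ∀ ⦃v w⦄, r v w → g v = g w) (f : V → U) (v : V) :
    {w | r v w} ∩ {w | f w ≠ g w} = {w | r v w} \ f ⁻¹' {g v} := by
  ext w
  exact and_congr_right fun hw : r v w => by simp [hg hw]

theorem MergesClasses.isMostFrequent_of_minimal [Finite V] (hg : MergesClasses r f g)
    (hmin : ∀ h, MergesClasses r f h → {v | f v ≠ g v}.ncard ≤ {v | f v ≠ h v}.ncard) (v : V) :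
    IsMostFrequent f {w | r v w} (g v) := by
  classical
  refine isMostFrequent_of_forall_mem (Set.toFinite _) ⟨v, r.refl v⟩ fun x hx => ?_
  rw [ncard_inter_preimage_le_iff (Set.toFinite _)]
  -- Exchange argument: give the class of `v` the value `f x` and keep `g` elsewhere.
  let h := {w | r v w}.piecewise (fun _ => f x) g
  have hh : MergesClasses r f h := hg.piecewise hx
  have hhv : h v = f x := Set.piecewise_eq_of_mem _ _ _ (r.refl v)
  have houtside : {w | f w ≠ g w} \ {w | r v w} = {w | f w ≠ h w} \ {w | r v w} := by
    ext w
    simp +contextual [h, Set.piecewise]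
  have hsplit_g := Set.ncard_inter_add_ncard_sdiff_eq_ncard {w | f w ≠ g w} {w | r v w}
  have hsplit_h := Set.ncard_inter_add_ncard_sdiff_eq_ncard {w | f w ≠ h w} {w | r v w}
  rw [Set.inter_comm, class_inter_ne hg.eq_of_rel] at hsplit_g
  rw [Set.inter_comm, class_inter_ne hh.eq_of_rel, hhv] at hsplit_h
  have hle := hmin h hh
  rw [houtside] at hsplit_g
  omega

theorem ncard_ne_le_of_isMostFrequent [Finite V] {h : V → U} (hg : ∀ ⦃v w⦄, r v w → g v = g w)
    (hmf : ∀ v, IsMostFrequent f {w | r v w} (g v)) (hh : ∀ ⦃v w⦄, r v w → h v = h w) :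
    {v | f v ≠ g v}.ncard ≤ {v | f v ≠ h v}.ncard := by
  refine ncard_le_ncard_of_forall_class r fun v => ?_
  rw [class_inter_ne hg, class_inter_ne hh, ← ncard_inter_preimage_le_iff (Set.toFinite _)]
  exact (hmf v).2 (h v)

end MergesClasses

section MatchingDependencies

variable {T A U : Type*} {sim : A → A → U → U → Prop} {M : Finset (MD A)} {D D' : T → A → U}

theorem SimEdge.symm {p q : T × A} (h : SimEdge sim M D p q) : SimEdge sim M D q p :=
  let ⟨m, hm, hpq⟩ := h
  ⟨m, hm, hpq.symm⟩

theorem SimEdge.modifiable_of_ne {p q : T × A} (h : SimEdge sim M D p q)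
    (hne : D p.1 p.2 ≠ D q.1 q.2) : Modifiable sim M D p.1 p.2 := by
  obtain ⟨m, hm, ⟨hsim, hR⟩ | ⟨hsim, hR⟩⟩ := h
  · exact .left_ne hm hR hsim hne
  · exact .right_ne hm hR hsim hne.symm

theorem SimEdge.modifiable {p q : T × A} (h : SimEdge sim M D p q)
    (hq : Modifiable sim M D q.1 q.2) : Modifiable sim M D p.1 p.2 := by
  obtain ⟨m, hm, ⟨hsim, hR⟩ | ⟨hsim, hR⟩⟩ := h
  · exact .left_mod hm hR hsim hq
  · exact .right_mod hm hR hsim hq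

/-- The partition of the value positions into the connected components of the similarity graph. -/
def simComponent (sim : A → A → U → U → Prop) (M : Finset (MD A)) (D : T → A → U) :
    Setoid (T × A) :=
  Relation.EqvGen.setoid (SimEdge sim M D)

theorem SimEdge.simComponent {p q : T × A} (h : SimEdge sim M D p q) : simComponent sim M D p q :=
  .rel p q h

theorem simComponent_le_iff {s : Setoid (T × A)} :
    simComponent sim M D ≤ s ↔ ∀ p q, SimEdge sim M D p q → s p q :=
  ⟨fun h _ _ hpq => h hpq.simComponent, Setoid.eqvGen_le⟩

theorem eq_of_simComponent_of_not_modifiable {p q : T × A} (h : simComponent sim M D p q)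
    (hp : ¬ Modifiable sim M D p.1 p.2) : D q.1 q.2 = D p.1 p.2 := by
  suffices (Modifiable sim M D p.1 p.2 ↔ Modifiable sim M D q.1 q.2) ∧
      (¬ Modifiable sim M D p.1 p.2 → D q.1 q.2 = D p.1 p.2) from this.2 hp
  clear hp
  induction h with
  | rel p q h =>
    exact ⟨⟨h.symm.modifiable, h.modifiable⟩,
      fun hp => by_contra fun hne => hp (h.modifiable_of_ne (Ne.symm hne))⟩
  | refl p => exact ⟨.rfl, fun _ => rfl⟩
  | symm p q _ ih => exact ⟨ih.1.symm, fun hq => (ih.2 (mt ih.1.1 hq)).symm⟩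
  | trans p q x _ _ ihpq ihqx =>
    exact ⟨ihpq.1.trans ihqx.1, fun hp => (ihqx.2 (mt ihpq.1.2 hp)).trans (ihpq.2 hp)⟩

theorem Modifiable.exists_simComponent_ne {t : T} {c : A} (h : Modifiable sim M D t c) :
    ∃ q, simComponent sim M D (t, c) q ∧ D q.1 q.2 ≠ D t c := by
  have of_ne {t s : T} {c e : A} (hts : SimEdge sim M D (t, c) (s, e)) (hne : D s e ≠ D t c) :
      ∃ q, simComponent sim M D (t, c) q ∧ D q.1 q.2 ≠ D t c := ⟨(s, e), hts.simComponent, hne⟩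
  have of_neighbour {t s : T} {c e : A} (hts : SimEdge sim M D (t, c) (s, e))
      (hs : ∃ q, simComponent sim M D (s, e) q ∧ D q.1 q.2 ≠ D s e) :
      ∃ q, simComponent sim M D (t, c) q ∧ D q.1 q.2 ≠ D t c := by
    by_cases heq : D s e = D t c
    · obtain ⟨q, hsq, hne⟩ := hs
      exact ⟨q, (simComponent sim M D).trans hts.simComponent hsq, heq ▸ hne⟩
    · exact of_ne hts heq
  induction h with
  | left_ne hm hR hsim hne => exact of_ne ⟨_, hm, .inl ⟨hsim, hR⟩⟩ hne.symm
  | left_mod hm hR hsim _ ih => exact of_neighbour ⟨_, hm, .inl ⟨hsim, hR⟩⟩ ih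
  | right_ne hm hR hsim hne => exact of_ne ⟨_, hm, .inr ⟨hsim, hR⟩⟩ hne
  | right_mod hm hR hsim _ ih => exact of_neighbour ⟨_, hm, .inr ⟨hsim, hR⟩⟩ ih

theorem not_modifiable_iff {t : T} {c : A} :
    ¬ Modifiable sim M D t c ↔ ∀ q, simComponent sim M D (t, c) q → D q.1 q.2 = D t c := by
  refine ⟨fun h q hq => eq_of_simComponent_of_not_modifiable hq h, fun h hmod => ?_⟩
  obtain ⟨q, hq, hne⟩ := hmod.exists_simComponent_ne
  exact hne (h q hq)

theorem forall_simComponent_eq_iff (g : T × A → U) :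
    (∀ p q, simComponent sim M D p q → g p = g q) ↔
      ∀ m ∈ M, ∀ t₁ t₂, simPairs sim m.L D t₁ t₂ → ∀ p ∈ m.R, g (t₁, p.1) = g (t₂, p.2) := by
  constructor
  · intro h m hm t₁ t₂ hsim p hp
    exact h _ _ (SimEdge.simComponent ⟨m, hm, .inl ⟨hsim, hp⟩⟩)
  · intro h
    refine simComponent_le_iff (s := Setoid.ker g).2 ?_
    rintro p q ⟨m, hm, ⟨hsim, hR⟩ | ⟨hsim, hR⟩⟩
    · exact h m hm _ _ hsim _ hR
    · exact (h m hm _ _ hsim _ hR).symm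

theorem sat_iff_mergesClasses :
    Sat sim M D D' ↔
      MergesClasses (simComponent sim M D) (Function.uncurry D) (Function.uncurry D') := by
  have hconst := forall_simComponent_eq_iff (sim := sim) (M := M) (D := D) (Function.uncurry D')
  constructor
  · rintro ⟨hmerge, hkeep⟩
    exact ⟨hconst.2 hmerge, fun p hp => hkeep p.1 p.2 (not_modifiable_iff.2 hp)⟩
  · rintro ⟨hmerge, hkeep⟩
    exact ⟨hconst.1 hmerge, fun t c hc => hkeep (t, c) (not_modifiable_iff.1 hc)⟩

theorem Sat.eq_of_self (hD : Sat sim M D D) (h : Sat sim M D D') : D' = D := by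
  funext t c
  refine (sat_iff_mergesClasses.1 h).eq_of_forall_eq (t, c) fun q hq => ?_
  exact ((sat_iff_mergesClasses.1 hD).eq_of_rel hq).symm

/-- The attributes on the left of a matching dependency. -/
def MD.lhs (m : MD A) : Set A := {a | ∃ p ∈ m.L, a = p.1 ∨ a = p.2}

/-- The attributes on the right of a matching dependency. -/
def MD.rhs (m : MD A) : Set A := {a | ∃ p ∈ m.R, a = p.1 ∨ a = p.2}

/-- A set of matching dependencies is non-interacting if no attribute occurs on the left of one of
them and on the right of one of them, possibly the same. -/
def NonInteracting (M : Finset (MD A)) : Prop :=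
  ∀ m ∈ M, ∀ m' ∈ M, Disjoint m.lhs m'.rhs

theorem Modifiable.exists_mem_rhs {t : T} {c : A} (h : Modifiable sim M D t c) :
    ∃ m ∈ M, c ∈ m.rhs := by
  cases h with
  | left_ne hm hR _ _ | left_mod hm hR _ _ => exact ⟨_, hm, _, hR, .inl rfl⟩
  | right_ne hm hR _ _ | right_mod hm hR _ _ => exact ⟨_, hm, _, hR, .inr rfl⟩

theorem Sat.eq_of_mem_lhs (hM : NonInteracting M) (h : Sat sim M D D') {m : MD A} (hm : m ∈ M)
    {a : A} (ha : a ∈ m.lhs) (t : T) : D' t a = D t a := by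
  refine h.2 t a fun hmod => ?_
  obtain ⟨m', hm', ha'⟩ := hmod.exists_mem_rhs
  exact (hM m hm m' hm').ne_of_mem ha ha' rfl

theorem Sat.self (hM : NonInteracting M) (h : Sat sim M D D') : Sat sim M D' D' := by
  refine ⟨fun m hm t₁ t₂ hsim => h.1 m hm t₁ t₂ fun p hp => ?_, fun _ _ _ => rfl⟩
  rw [← h.eq_of_mem_lhs hM hm ⟨p, hp, .inl rfl⟩, ← h.eq_of_mem_lhs hM hm ⟨p, hp, .inr rfl⟩]
  exact hsim p hp

theorem resolvedInstance_iff_sat (hM : NonInteracting M) :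
    ResolvedInstance sim M D D' ↔ Sat sim M D D' := by
  constructor
  · rintro ⟨L, hchain, -⟩
    replace hchain : List.IsChain (Sat sim M) (D :: (L ++ [D'])) := hchain
    induction L generalizing D with
    | nil => simpa using hchain
    | cons E L ih =>
      obtain ⟨hDE, hchain⟩ := List.isChain_cons_cons.1 hchain
      rwa [(hDE.self hM).eq_of_self (ih hchain)]
  · intro h
    exact ⟨[], List.isChain_pair.2 h, h.self hM⟩

theorem numChanges_eq_ncard (D D' : T → A → U) :
    numChanges D D' = {p | Function.uncurry D p ≠ Function.uncurry D' p}.ncard :=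
  rfl

theorem isMRI_iff_isMostFrequent [Finite T] [Finite A] (hM : NonInteracting M) :
    IsMRI sim M D D' ↔
      (∀ p q, simComponent sim M D p q → Function.uncurry D' p = Function.uncurry D' q) ∧
        ∀ p, IsMostFrequent (Function.uncurry D) {q | simComponent sim M D p q}
          (Function.uncurry D' p) := by
  simp only [IsMRI, resolvedInstance_iff_sat hM, sat_iff_mergesClasses, numChanges_eq_ncard]
  constructor
  · rintro ⟨hD', hmin⟩
    exact ⟨hD'.eq_of_rel, hD'.isMostFrequent_of_minimal fun E => hmin (Function.curry E)⟩
  · rintro ⟨hconst, hmf⟩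
    exact ⟨mergesClasses_of_isMostFrequent hconst hmf,
      fun E hE => ncard_ne_le_of_isMostFrequent hconst hmf hE.eq_of_rel⟩

end MatchingDependencies

section KeyDependency

variable {T AB BB U : Type*} {D D' : T → AB ⊕ BB → U}

/-- The key part of the tuple `t`, that is, its restriction to `Ā`. -/
def keyOf (D : T → AB ⊕ BB → U) (t : T) : AB → U := fun a => D t (Sum.inl a)

/-- The non-key part of the tuple `t`, that is, its restriction to `B̄`. -/
def valOf (D : T → AB ⊕ BB → U) (t : T) : BB → U := fun b => D t (Sum.inr b)

theorem matches_iff {κ : AB → U} {t : T} : Matches D κ t ↔ keyOf D t = κ :=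
  funext_iff.symm

theorem tuplesOf_eq_range (D : T → AB ⊕ BB → U) :
    tuplesOf D = Set.range fun t => (keyOf D t, valOf D t) := by
  ext r
  exact exists_congr fun _ => eq_comm

theorem mostFreqB_iff {κ : AB → U} {b : BB} {v : U} :
    MostFreqB D κ b v ↔ IsMostFrequent (fun t => D t (Sum.inr b)) {t | Matches D κ t} v :=
  Iff.rfl

theorem mem_Rprime_keyOf {t : T} {f : BB → U} :
    (keyOf D t, f) ∈ Rprime D ↔ ∀ b, MostFreqB D (keyOf D t) b (f b) :=
  and_iff_right ⟨t, matches_iff.2 rfl⟩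

/-- A label for the component of a position under the key dependency: the positions `(t, b)` with
`b ∈ B̄` are grouped by key value and attribute, and each `(t, a)` with `a ∈ Ā` stands alone. -/
def keyGroup (D : T → AB ⊕ BB → U) : T × (AB ⊕ BB) → T × AB ⊕ (AB → U) × BB
  | (t, Sum.inl a) => Sum.inl (t, a)
  | (t, Sum.inr b) => Sum.inr (keyOf D t, b)

theorem ker_keyGroup_iff {p q : T × (AB ⊕ BB)} :
    Setoid.ker (keyGroup D) p q ↔
      p = q ∨ ∃ t s b, keyOf D t = keyOf D s ∧ p = (t, Sum.inr b) ∧ q = (s, Sum.inr b) := by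
  obtain ⟨t, a | b⟩ := p <;> obtain ⟨s, a' | b'⟩ := q <;>
    simp only [Setoid.ker_def, keyGroup] <;> grind

theorem ker_keyGroup_inl (D : T → AB ⊕ BB → U) (t : T) (a : AB) :
    {q | Setoid.ker (keyGroup D) (t, Sum.inl a) q} = {(t, Sum.inl a)} := by
  ext ⟨s, a' | b⟩ <;> simp [Setoid.ker_def, keyGroup, eq_comm]

theorem ker_keyGroup_inr (D : T → AB ⊕ BB → U) (t : T) (b : BB) :
    {q | Setoid.ker (keyGroup D) (t, Sum.inr b) q} =
      (·, Sum.inr b) '' {s | Matches D (keyOf D t) s} := by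
  ext ⟨s, a | b'⟩ <;> simp [Setoid.ker_def, keyGroup, matches_iff, eq_comm]

theorem forall_isMostFrequent_ker_keyGroup_iff :
    (∀ p, IsMostFrequent (Function.uncurry D) {q | Setoid.ker (keyGroup D) p q}
      (Function.uncurry D' p)) ↔
      keyOf D' = keyOf D ∧ ∀ t b, MostFreqB D (keyOf D t) b (D' t (Sum.inr b)) := by
  have hinj (b : BB) : Function.Injective fun t : T => (t, (Sum.inr b : AB ⊕ BB)) :=
    Prod.mk_left_injective _
  simp only [Prod.forall, Sum.forall, ker_keyGroup_inl, ker_keyGroup_inr, isMostFrequent_singleton,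
    isMostFrequent_image (hinj _), mostFreqB_iff, forall_and, funext_iff]
  rfl

theorem forall_ker_keyGroup_eq_iff :
    (∀ p q, Setoid.ker (keyGroup D) p q → Function.uncurry D' p = Function.uncurry D' q) ↔
      ∀ t s, keyOf D t = keyOf D s → valOf D' t = valOf D' s := by
  constructor
  · intro h t s hts
    funext b
    exact h _ _ (ker_keyGroup_iff.2 (.inr ⟨t, s, b, hts, rfl, rfl⟩))
  · intro h p q hpq
    obtain rfl | ⟨t, s, b, hts, rfl, rfl⟩ := ker_keyGroup_iff.1 hpq
    · rfl
    · exact congrFun (h t s hts) b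

theorem isRepair_tuplesOf_iff (hkey : keyOf D' = keyOf D) :
    IsRepair D (tuplesOf D') ↔
      (∀ t s, keyOf D t = keyOf D s → valOf D' t = valOf D' s) ∧
        ∀ t b, MostFreqB D (keyOf D t) b (D' t (Sum.inr b)) := by
  rw [tuplesOf_eq_range, hkey, IsRepair, Set.range_subset_iff, and_comm]
  refine and_congr ?_ (forall_congr' fun t => mem_Rprime_keyOf)
  simp only [matches_iff, forall_exists_index, forall_apply_eq_imp_iff]
  constructor
  · intro huniq t s hts
    exact (huniq t).unique ⟨t, rfl⟩ ⟨s, by rw [hts]⟩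
  · intro hconst t
    refine ⟨valOf D' t, ⟨t, rfl⟩, ?_⟩
    rintro f ⟨s, hs⟩
    obtain ⟨hst, rfl⟩ := Prod.mk.inj hs
    exact hconst s t hst

theorem IsRepair.exists_tuplesOf_eq {S : Set ((AB → U) × (BB → U))} (hS : IsRepair D S) :
    ∃ D' : T → AB ⊕ BB → U, keyOf D' = keyOf D ∧ tuplesOf D' = S := by
  choose f hf huniq using fun t => hS.2 (keyOf D t) ⟨t, matches_iff.2 rfl⟩
  refine ⟨fun t => Sum.elim (keyOf D t) (f t), rfl, ?_⟩
  rw [tuplesOf_eq_range]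
  refine Set.Subset.antisymm (Set.range_subset_iff.2 hf) ?_
  rintro ⟨κ, g⟩ hg
  obtain ⟨t, ht⟩ := (hS.1 hg).1
  obtain rfl := matches_iff.1 ht
  exact ⟨t, Prod.ext rfl (huniq t g hg).symm⟩

variable [Fintype AB] [Fintype BB] [DecidableEq AB] [DecidableEq BB]

variable (AB BB) in
/-- The key dependency `R[Ā] = R[Ā] → R[B̄] ≐ R[B̄]`. Only the attribute pairs are recorded here;
that they are compared by equality is a hypothesis on `sim`. -/
abbrev keyMD : MD (AB ⊕ BB) :=
  ⟨Finset.univ.image (fun a : AB => (Sum.inl a, Sum.inl a)),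
    Finset.univ.image (fun b : BB => (Sum.inr b, Sum.inr b))⟩

theorem nonInteracting_keyMD : NonInteracting {keyMD AB BB} := by
  simp [NonInteracting, MD.lhs, MD.rhs, Set.disjoint_left]

variable {sim : AB ⊕ BB → AB ⊕ BB → U → U → Prop}

theorem simPairs_keyMD (heq : ∀ (a : AB) (x y : U), sim (Sum.inl a) (Sum.inl a) x y ↔ x = y)
    {t s : T} : simPairs sim (keyMD AB BB).L D t s ↔ keyOf D t = keyOf D s := by
  simp [simPairs, keyOf, funext_iff, heq]

theorem simComponent_keyMD
    (heq : ∀ (a : AB) (x y : U), sim (Sum.inl a) (Sum.inl a) x y ↔ x = y) :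
    simComponent sim {keyMD AB BB} D = Setoid.ker (keyGroup D) := by
  apply le_antisymm
  · rw [simComponent_le_iff]
    rintro ⟨t, c⟩ ⟨s, e⟩ h
    simp only [SimEdge, Finset.mem_singleton, exists_eq_left, simPairs_keyMD heq] at h
    obtain ⟨hkey, hR⟩ | ⟨hkey, hR⟩ := h <;>
    · simp only [Finset.mem_image, Finset.mem_univ, true_and, Prod.mk.injEq] at hR
      obtain ⟨b, rfl, rfl⟩ := hR
      simp [Setoid.ker_def, keyGroup, hkey]
  · intro p q hpq
    obtain rfl | ⟨t, s, b, hkey, rfl, rfl⟩ := ker_keyGroup_iff.1 hpq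
    · exact (simComponent sim {keyMD AB BB} D).refl p
    · exact SimEdge.simComponent ⟨_, Finset.mem_singleton_self _,
        .inl ⟨(simPairs_keyMD heq).2 hkey, by simp⟩⟩

theorem isMRI_keyMD_iff_isRepair [Finite T]
    (heq : ∀ (a : AB) (x y : U), sim (Sum.inl a) (Sum.inl a) x y ↔ x = y) :
    IsMRI sim {keyMD AB BB} D D' ↔ keyOf D' = keyOf D ∧ IsRepair D (tuplesOf D') := by
  rw [isMRI_iff_isMostFrequent nonInteracting_keyMD, simComponent_keyMD heq,
    forall_ker_keyGroup_eq_iff, forall_isMostFrequent_ker_keyGroup_iff, and_left_comm]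
  exact and_congr_right fun hkey => (isRepair_tuplesOf_iff hkey).symm

end KeyDependency

/-- Proposition 5.1: for the MD `R[Ā] = R[Ā] → R[B̄] ≐ R[B̄]`, the sets of
tuples of the MRIs of `D` are exactly the repairs of `R'`. -/
theorem mri_tuples_eq_repairs {T AB BB U : Type*}
    [Fintype T] [Fintype AB] [Fintype BB] [DecidableEq AB] [DecidableEq BB]
    (sim : AB ⊕ BB → AB ⊕ BB → U → U → Prop)
    (hsym : ∀ (a b : AB ⊕ BB) (x y : U), sim a b x y → sim b a y x)
    (hsub : ∀ (a b : AB ⊕ BB) (x y : U), x = y → sim a b x y)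
    (heq : ∀ (a : AB) (x y : U), sim (Sum.inl a) (Sum.inl a) x y ↔ x = y)
    (D : T → AB ⊕ BB → U) :
    { S : Set ((AB → U) × (BB → U)) | ∃ D' : T → AB ⊕ BB → U,
        IsMRI sim
          ({⟨Finset.univ.image (fun a : AB => (Sum.inl a, Sum.inl a)),
             Finset.univ.image (fun b : BB => (Sum.inr b, Sum.inr b))⟩} :
            Finset (MD (AB ⊕ BB))) D D' ∧
        S = tuplesOf D' } =
    { S : Set ((AB → U) × (BB → U)) | IsRepair D S } := by
  ext S
  constructor
  · rintro ⟨D', hD', rfl⟩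
    exact ((isMRI_keyMD_iff_isRepair heq).1 hD').2
  · intro hS
    obtain ⟨D', hkey, rfl⟩ := IsRepair.exists_tuplesOf_eq hS
    exact ⟨D', (isMRI_keyMD_iff_isRepair heq).2 ⟨hkey, hS⟩, rfl⟩
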